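/- arXiv:1301.0138 — 5 statements merged into one kernel-verified Lean document; each statement's English description precedes it below -/
import Mathlib

section
/- For every integer m ≥ 0, the identity R_m(x,y) = −(X_{m+1}(x,y) + X_m(x,y) + x²) holds in ℂ[x,y]. -/
open Polynomial

/-- The Chebyshev-like polynomials `S n ∈ R[X]` defined by `S 0 = 1`, `S 1 = X` and
`S (n+1) = X * S n - S (n-1)` for all `n : ℤ`. -/
noncomputable def S (R : Type*) [CommRing R] : ℤ → R[X]
  | 0 => 1
  | 1 => X
  | (n : ℕ) + 2 => X * S R (n + 1) - S R n
  | -((n : ℕ) + 1) => X * S R (-n) - S R (-n + 1)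
  termination_by n => Int.natAbs n + Int.natAbs (n - 1)

/-- The variable `x` of `ℂ[x,y]`, realized as `MvPolynomial (Fin 2) ℂ`. -/
noncomputable def xP : MvPolynomial (Fin 2) ℂ := MvPolynomial.X 0

/-- The variable `y` of `ℂ[x,y]`. -/
noncomputable def yP : MvPolynomial (Fin 2) ℂ := MvPolynomial.X 1

/-- The polynomials `X_m ∈ ℂ[x,y]` defined by `X_0 = -2`, `X_1 = -x^2 - y` and
`X_{m+1} = y * X_m - X_{m-1} - 2x^2` for all `m : ℤ`. -/
noncomputable def Xp : ℤ → MvPolynomial (Fin 2) ℂ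
  | 0 => -2
  | 1 => -(MvPolynomial.X 0) ^ 2 - MvPolynomial.X 1
  | (m : ℕ) + 2 => MvPolynomial.X 1 * Xp (m + 1) - Xp m - 2 * (MvPolynomial.X 0) ^ 2
  | -((m : ℕ) + 1) => MvPolynomial.X 1 * Xp (-m) - Xp (-m + 1) - 2 * (MvPolynomial.X 0) ^ 2
  termination_by m => Int.natAbs m + Int.natAbs (m - 1)

/-- The polynomial `R_m(x,y) = (y+2) * (S_m(y) - S_{m-1}(y) + x^2 * ∑_{i=0}^{m-1} S_i(y))`. -/
noncomputable def Rp (m : ℕ) : MvPolynomial (Fin 2) ℂ :=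
  (yP + 2) * (aeval yP (S ℂ (m : ℤ)) - aeval yP (S ℂ ((m : ℤ) - 1))
    + xP ^ 2 * ∑ i ∈ Finset.range m, aeval yP (S ℂ (i : ℤ)))

/-- The value `S (-1) = 0`. -/
theorem S_neg_one (R : Type*) [CommRing R] : S R (-1) = 0 := by
  have h := S.eq_4 R 0
  simpa [S.eq_1, S.eq_2] using h

/-- The recurrence for `S`, shifted so that it starts at `S (-1)`. -/
theorem S_natCast_add_one (R : Type*) [CommRing R] (n : ℕ) :
    S R ((n : ℤ) + 1) = X * S R n - S R ((n : ℤ) - 1) := by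
  cases n with
  | zero => simp [S.eq_1, S.eq_2, S_neg_one]
  | succ k =>
    push_cast
    rw [add_sub_cancel_right, add_assoc, one_add_one_eq_two]
    exact S.eq_3 R k

/-- The recurrence for `Xp` at natural indices. -/
theorem Xp_natCast_add_two (m : ℕ) :
    Xp ((m : ℤ) + 2) = yP * Xp ((m : ℤ) + 1) - Xp m - 2 * xP ^ 2 :=
  Xp.eq_3 m

/-- The partial sums of `S` satisfy the inhomogeneous form of its recurrence. -/
theorem sum_range_S_succ (R : Type*) [CommRing R] (m : ℕ) :
    ∑ i ∈ Finset.range (m + 2), S R (i : ℤ) =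
      X * ∑ i ∈ Finset.range (m + 1), S R (i : ℤ) - ∑ i ∈ Finset.range m, S R (i : ℤ) + 1 := by
  induction m with
  | zero => simp [Finset.sum_range_succ, S.eq_1, S.eq_2, add_comm]
  | succ k ih =>
    have h := S_natCast_add_one R (k + 1)
    have h₀ := Finset.sum_range_succ (fun i : ℕ => S R (i : ℤ)) k
    have h₁ := Finset.sum_range_succ (fun i : ℕ => S R (i : ℤ)) (k + 1)
    have h₂ := Finset.sum_range_succ (fun i : ℕ => S R (i : ℤ)) (k + 2)
    push_cast at h h₁ h₂
    rw [add_sub_cancel_right, add_assoc, one_add_one_eq_two] at h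
    linear_combination ih + h + h₂ - X * h₁ + h₀

/-- The polynomials `Rp` satisfy the recurrence `R_{m+2} = y R_{m+1} - R_m + (y + 2) x²`. -/
theorem Rp_add_two (m : ℕ) :
    Rp (m + 2) = yP * Rp (m + 1) - Rp m + (yP + 2) * xP ^ 2 := by
  have hS := congrArg (aeval yP) (S_natCast_add_one ℂ m)
  have hS' := congrArg (aeval yP) (S_natCast_add_one ℂ (m + 1))
  have hsum := congrArg (aeval yP) (sum_range_S_succ ℂ m)
  simp only [map_sub, map_add, map_mul, map_sum, map_one, aeval_X, Nat.cast_add, Nat.cast_one,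
    add_sub_cancel_right, add_assoc, one_add_one_eq_two] at hS hS' hsum
  have e : (m : ℤ) + 2 - 1 = m + 1 := by ring
  simp only [Rp, Nat.cast_add, Nat.cast_one, Nat.cast_ofNat, e, add_sub_cancel_right]
  linear_combination (yP + 2) * (hS' - hS + xP ^ 2 * hsum)

/-- `R_m(x,y) = -(X_{m+1} + X_m + x^2)` for every integer `m ≥ 0`. -/
theorem Rp_eq_Xp (m : ℕ) :
    Rp m = -(Xp ((m : ℤ) + 1) + Xp (m : ℤ) + xP ^ 2) := by
  have X_zero : Xp 0 = -2 := Xp.eq_1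
  have X_one : Xp 1 = -xP ^ 2 - yP := Xp.eq_2
  induction m using Nat.twoStepInduction with
  | zero =>
    simp [Rp, S.eq_1, S_neg_one, X_zero, X_one]
    ring
  | one =>
    have X_two := Xp_natCast_add_two 0
    simp [X_zero, X_one] at X_two
    simp [Rp, S.eq_1, S.eq_2, X_one, one_add_one_eq_two, X_two]
    ring
  | more k ih ih' =>
    have h := Xp_natCast_add_two k
    have h' := Xp_natCast_add_two (k + 1)
    have e : (k : ℤ) + 1 + 2 = k + 2 + 1 := by ring
    rw [Rp_add_two, ih, ih']
    push_cast at h' ⊢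
    rw [e] at h'
    rw [add_assoc (k : ℤ) 1 1, one_add_one_eq_two] at h' ⊢
    linear_combination h + h'
end

section
/- For every integer m, the identity X_m² + X_{m−1}² − y·X_m·X_{m−1} + 2x²·(X_m + X_{m−1}) = −y² − 2x²y − x⁴ − 4x² + 4 holds in ℂ[x,y]. -/
open Polynomial

/-- The recurrence defining `Xp`, valid at every integer. -/
theorem Xp_add_two (m : ℤ) : Xp (m + 2) = yP * Xp (m + 1) - Xp m - 2 * xP ^ 2 := by
  unfold xP yP
  match m with
  | (k : ℕ) => exact Xp.eq_3 k
  | -(k + 1 : ℕ) =>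
    have h := Xp.eq_4 k
    rw [show (-(k + 1 : ℕ) : ℤ) + 2 = -k + 1 by push_cast; ring,
      show (-(k + 1 : ℕ) : ℤ) + 1 = -k by push_cast; ring,
      show (-(k + 1 : ℕ) : ℤ) = Int.negSucc k from rfl, h]
    ring

/-- The quadratic expression in `Xp (m + 1)` and `Xp m` does not depend on `m`. -/
theorem Xp_sq_identity_succ (m : ℤ) :
    Xp (m + 1) ^ 2 + Xp m ^ 2 - yP * Xp (m + 1) * Xp m + 2 * xP ^ 2 * (Xp (m + 1) + Xp m) =
      -yP ^ 2 - 2 * xP ^ 2 * yP - xP ^ 4 - 4 * xP ^ 2 + 4 := by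
  induction m with
  | zero =>
    rw [zero_add, Xp.eq_1, Xp.eq_2, ← xP, ← yP]
    ring
  | succ n ih =>
    rw [← ih, add_assoc, one_add_one_eq_two, Xp_add_two]
    ring
  | pred n ih =>
    have h := Xp_add_two (-n - 1)
    rw [show (-n - 1 : ℤ) + 2 = -n + 1 by ring, sub_add_cancel] at h
    rw [← ih, sub_add_cancel, h]
    ring

/-- `X_m^2 + X_{m-1}^2 - y X_m X_{m-1} + 2x^2 (X_m + X_{m-1}) = -y^2 - 2x^2 y - x^4 - 4x^2 + 4`. -/
theorem Xp_sq_identity (m : ℤ) :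
    Xp m ^ 2 + Xp (m - 1) ^ 2 - yP * Xp m * Xp (m - 1) + 2 * xP ^ 2 * (Xp m + Xp (m - 1)) =
      -yP ^ 2 - 2 * xP ^ 2 * yP - xP ^ 4 - 4 * xP ^ 2 + 4 := by
  simpa only [sub_add_cancel] using Xp_sq_identity_succ (m - 1)
end

section
/- Let p ≥ 5 be an odd integer not divisible by 3, and set d = (p−1)/2 and ℓ = ⌊p/3⌋. Then gcd(S_d(z) − S_{d−1}(z), S_{ℓ−1−⌊ℓ/2⌋}(z)) = 1 and gcd(S_d(z) − S_{d−1}(z), S_{d−ℓ−1}(z)) = 1 in ℂ[z]. -/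
open Polynomial

theorem S_eq_chebyshev_S (R : Type*) [CommRing R] (n : ℤ) : S R n = Chebyshev.S R n := by
  induction n using Chebyshev.induct with
  | zero => simp [S]
  | one => simp [S]
  | add_two n ih1 ih2 => exact (S.eq_3 R n).trans (by rw [ih1, ih2, Chebyshev.S_add_two])
  | neg_add_one n ih1 ih2 =>
    rw [Chebyshev.S_sub_one, ← ih1, ← ih2, ← S.eq_4 R n, Int.negSucc_eq, neg_add']

namespace Polynomial.Chebyshev

variable (R : Type*) [CommRing R]

/-- The addition formula for the rescaled Chebyshev polynomials of the second kind. -/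
theorem S_add (m n : ℤ) : S R (m + n) = S R m * S R n - S R (m - 1) * S R (n - 1) := by
  induction n using Chebyshev.induct with
  | zero => simp
  | one => simp [S_add_one, mul_comm]
  | add_two n ih1 ih2 =>
    rw [← add_assoc, S_add_two, add_assoc, ih1, ih2, S_add_two R n,
      show (n : ℤ) + 2 - 1 = n - 1 + 2 by ring, S_add_two R (n - 1)]
    ring_nf
  | neg_add_one n ih1 ih2 =>
    rw [← add_sub_assoc, S_sub_one, add_assoc, ih1, ih2]
    linear_combination (norm := ring_nf)
      S R (m - 1) * S_sub_one R (-n - 1) - S R m * S_sub_one R (-n)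

theorem S_sub_one_dvd_S_mul_sub_one (m : ℤ) (k : ℕ) : S R (m - 1) ∣ S R (k * m - 1) := by
  induction k with
  | zero => simp
  | succ k ih =>
    rw [show ((k + 1 : ℕ) : ℤ) * m - 1 = k * m + (m - 1) by push_cast; ring, S_add]
    exact dvd_sub (dvd_mul_left _ _) (ih.mul_right _)

theorem isCoprime_S_S_sub_one (n : ℤ) : IsCoprime (S R n) (S R (n - 1)) := by
  refine ⟨S R n - X * S R (n - 1), S R (n - 1), ?_⟩
  have h := S_sq_add_S_sq R (n - 1)
  rw [sub_add_cancel] at h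
  linear_combination h

end Polynomial.Chebyshev

/-- For odd `p ≥ 5` not divisible by `3`, with `d = (p-1)/2` and `ℓ = ⌊p/3⌋`,
`S_d(z) - S_{d-1}(z)` is coprime to `S_{ℓ-1-⌊ℓ/2⌋}(z)` and to `S_{d-ℓ-1}(z)`. -/
theorem coprime_S_d_S_aux (p : ℤ) (hp5 : 5 ≤ p) (hodd : Odd p) (h3 : ¬(3 ∣ p)) :
    IsCoprime (S ℂ ((p - 1) / 2) - S ℂ ((p - 1) / 2 - 1))
        (S ℂ (p / 3 - 1 - p / 3 / 2)) ∧
      IsCoprime (S ℂ ((p - 1) / 2) - S ℂ ((p - 1) / 2 - 1))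
        (S ℂ ((p - 1) / 2 - p / 3 - 1)) := by
  have key : ∀ m : ℤ, p = 6 * m + 1 ∨ p = 6 * m - 1 →
      IsCoprime (S ℂ ((p - 1) / 2) - S ℂ ((p - 1) / 2 - 1)) (S ℂ (m - 1)) := by
    intro m hm
    simp only [S_eq_chebyshev_S]
    have hdvd := Chebyshev.S_sub_one_dvd_S_mul_sub_one ℂ m 3
    have hcop := Chebyshev.isCoprime_S_S_sub_one ℂ ((p - 1) / 2)
    rcases hm with hm | hm
    · rw [show (p - 1) / 2 = (3 : ℕ) * m by omega] at hcop ⊢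
      refine IsCoprime.of_isCoprime_of_dvd_right ?_ hdvd
      simpa [sub_eq_add_neg] using hcop.add_mul_left_left (-1)
    · rw [show (p - 1) / 2 = (3 : ℕ) * m - 1 by omega] at hcop ⊢
      refine IsCoprime.of_isCoprime_of_dvd_right ?_ hdvd
      have h := hcop.symm.neg_left.add_mul_left_left 1
      rwa [mul_one, neg_add_eq_sub] at h
  obtain ⟨k, rfl⟩ := hodd
  constructor
  · rw [show (2 * k + 1) / 3 - 1 - (2 * k + 1) / 3 / 2 =
      (2 * k + 1) / 3 - (2 * k + 1) / 3 / 2 - 1 by ring]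
    exact key _ (by omega)
  · exact key _ (by omega)
end

section
/- For every integer n ≥ 0, the alternating sum α_n = ∑_{i=0}^{n} (−1)^{n−i}·S_i(z) satisfies α_n = S_{n−⌊(n+1)/2⌋}(z)·(S_{⌊(n+1)/2⌋}(z) − S_{⌊(n−1)/2⌋}(z)) in ℂ[z]. -/
open Polynomial

theorem S_zero (R : Type*) [CommRing R] : S R 0 = 1 := by simp [S]

theorem S_one (R : Type*) [CommRing R] : S R 1 = X := by simp [S]

theorem S_add_two (R : Type*) [CommRing R] (n : ℕ) :
    S R ((n : ℤ) + 2) = X * S R ((n : ℤ) + 1) - S R (n : ℤ) :=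
  S.eq_3 R n

theorem S_add_one (R : Type*) [CommRing R] (n : ℕ) :
    S R ((n : ℤ) + 1) = X * S R (n : ℤ) - S R ((n : ℤ) - 1) := by
  cases n with
  | zero => simp [S_zero, S_one, S_neg_one]
  | succ k =>
    have h := S_add_two R k
    push_cast
    rwa [show (k : ℤ) + 1 + 1 = k + 2 by ring, add_sub_cancel_right]

/-- Duplication formulas for `S`. -/
theorem S_two_mul_and_S_two_mul_add_one (R : Type*) [CommRing R] (m : ℕ) :
    S R (2 * (m : ℤ)) = S R (m : ℤ) ^ 2 - S R ((m : ℤ) - 1) ^ 2 ∧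
      S R (2 * (m : ℤ) + 1) = S R (m : ℤ) * (S R ((m : ℤ) + 1) - S R ((m : ℤ) - 1)) := by
  induction m with
  | zero => simp [S_zero, S_one, S_neg_one]
  | succ m ih =>
    obtain ⟨h_even, h_odd⟩ := ih
    have h₁ := S_add_one R m
    have h₂ := S_add_two R m
    have h₃ := S_add_two R (2 * m)
    have h₄ := S_add_two R (2 * m + 1)
    push_cast at h₃ h₄ ⊢
    rw [show 2 * (m : ℤ) + 1 + 2 = 2 * (m + 1) + 1 by ring,
      show 2 * (m : ℤ) + 1 + 1 = 2 * (m + 1) by ring] at h₄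
    rw [show 2 * (m : ℤ) + 2 = 2 * (m + 1) by ring] at h₃
    rw [show (m : ℤ) + 1 + 1 = m + 2 by ring, add_sub_cancel_right]
    have h_even' : S R (2 * ((m : ℤ) + 1)) = S R ((m : ℤ) + 1) ^ 2 - S R (m : ℤ) ^ 2 := by
      rw [h₃, h_odd, h_even, h₁]
      ring
    refine ⟨h_even', ?_⟩
    rw [h₄, h_even', h_odd, h₂, h₁]
    ring

theorem alternating_sum_succ {R : Type*} [CommRing R] (f : ℕ → R) (n : ℕ) :
    ∑ i ∈ Finset.range (n + 2), (-1 : R) ^ (n + 1 - i) * f i =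
      f (n + 1) - ∑ i ∈ Finset.range (n + 1), (-1 : R) ^ (n - i) * f i := by
  rw [Finset.sum_range_succ, Nat.sub_self, pow_zero, one_mul, sub_eq_neg_add,
    ← Finset.sum_neg_distrib]
  congr 1
  refine Finset.sum_congr rfl fun i hi => ?_
  rw [Nat.sub_add_comm (Nat.lt_succ_iff.mp (Finset.mem_range.mp hi)), pow_succ]
  ring

/-- For `n ≥ 0`, the alternating sum `α_n = ∑_{i=0}^{n} (-1)^{n-i} S_i(z)` equals
`S_{n-⌊(n+1)/2⌋}(z) * (S_{⌊(n+1)/2⌋}(z) - S_{⌊(n-1)/2⌋}(z))`. -/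
theorem alternating_sum_S (n : ℕ) :
    ∑ i ∈ Finset.range (n + 1), (-1 : ℂ[X]) ^ (n - i) * S ℂ (i : ℤ) =
      S ℂ ((n : ℤ) - ((n : ℤ) + 1) / 2) *
        (S ℂ (((n : ℤ) + 1) / 2) - S ℂ (((n : ℤ) - 1) / 2)) := by
  induction n with
  | zero => simp [S_zero, S_neg_one]
  | succ n ih =>
    rw [alternating_sum_succ (fun i : ℕ => S ℂ (i : ℤ)), ih]
    obtain ⟨m, rfl | rfl⟩ := n.even_or_odd'
    · have h := (S_two_mul_and_S_two_mul_add_one ℂ m).2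
      push_cast
      rw [show (2 * (m : ℤ) + 1) / 2 = m by omega, show (2 * (m : ℤ) - 1) / 2 = m - 1 by omega,
        show (2 * (m : ℤ) + 1 + 1) / 2 = m + 1 by omega,
        show (2 * (m : ℤ) + 1 - 1) / 2 = m by omega, show 2 * (m : ℤ) - m = m by ring,
        show 2 * (m : ℤ) + 1 - (m + 1) = m by ring, h]
      ring
    · have h := (S_two_mul_and_S_two_mul_add_one ℂ (m + 1)).1
      push_cast at h ⊢
      rw [add_sub_cancel_right] at h
      rw [show (2 * (m : ℤ) + 1 + 1 + 1) / 2 = m + 1 by omega,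
        show (2 * (m : ℤ) + 1 + 1 - 1) / 2 = m by omega,
        show (2 * (m : ℤ) + 1 + 1) / 2 = m + 1 by omega,
        show (2 * (m : ℤ) + 1 - 1) / 2 = m by omega,
        show 2 * (m : ℤ) + 1 + 1 - (m + 1) = m + 1 by ring,
        show 2 * (m : ℤ) + 1 - (m + 1) = m by ring,
        show 2 * (m : ℤ) + 1 + 1 = 2 * (m + 1) by ring, h]
      ring
end

section
/- For every integer n ≥ 0, the identity −T_{n+1}(z) + 2·(∑_{i=1}^{n} (−1)^{n−i}·T_i(z) + (−1)^n) = (2−z)·S_n(z) holds in ℂ[z]. -/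
open Polynomial

/-- The Chebyshev-like polynomials of the first kind `T n ∈ R[X]` defined by `T 0 = 2`,
`T 1 = X` and `T (n+1) = X * T n - T (n-1)` for all `n : ℤ`. -/
noncomputable def Tc (R : Type*) [CommRing R] : ℤ → R[X]
  | 0 => 2
  | 1 => X
  | (n : ℕ) + 2 => X * Tc R (n + 1) - Tc R n
  | -((n : ℕ) + 1) => X * Tc R (-n) - Tc R (-n + 1)
  termination_by n => Int.natAbs n + Int.natAbs (n - 1)

theorem S_natCast_add_two (R : Type*) [CommRing R] (n : ℕ) :
    S R ((n : ℤ) + 2) = X * S R (n + 1) - S R n := by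
  exact S.eq_3 R n

theorem Tc_natCast_add_two (R : Type*) [CommRing R] (n : ℕ) :
    Tc R ((n : ℤ) + 2) = X * Tc R (n + 1) - Tc R n := by
  exact Tc.eq_3 R n

theorem Tc_natCast_eq_two_mul_S_sub (R : Type*) [CommRing R] (n : ℕ) :
    Tc R n = 2 * S R n - (X * S R n - S R (n + 1)) * X ∧
      Tc R (n + 1) = 2 * S R (n + 1) - X * S R n := by
  induction n with
  | zero =>
    have hS₀ : S R 0 = 1 := S.eq_1 R
    have hS₁ : S R 1 = X := S.eq_2 R
    have hT₀ : Tc R 0 = 2 := Tc.eq_1 R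
    have hT₁ : Tc R 1 = X := Tc.eq_2 R
    simp only [Nat.cast_zero, zero_add, hS₀, hS₁, hT₀, hT₁]
    constructor <;> ring
  | succ n ih =>
    have h : ((n + 1 : ℕ) : ℤ) + 1 = n + 2 := by push_cast; ring
    rw [h, Nat.cast_succ, S_natCast_add_two, Tc_natCast_add_two, ih.1, ih.2]
    constructor <;> ring

theorem Tc_add_one_sub_Tc_add_two (R : Type*) [CommRing R] (n : ℕ) :
    Tc R (n + 1) - Tc R (n + 2) = (2 - X) * (S R (n + 1) + S R n) := by
  rw [Tc_natCast_add_two, (Tc_natCast_eq_two_mul_S_sub R n).1, (Tc_natCast_eq_two_mul_S_sub R n).2]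
  ring

/-- Reversing the parity of an alternating sum when its last term is split off. -/
theorem sum_Icc_neg_one_pow_succ {A : Type*} [CommRing A] (f : ℕ → A) (n : ℕ) :
    ∑ i ∈ Finset.Icc 1 (n + 1), (-1) ^ (n + 1 - i) * f i =
      f (n + 1) - ∑ i ∈ Finset.Icc 1 n, (-1) ^ (n - i) * f i := by
  rw [Finset.sum_Icc_succ_top (by omega), sub_eq_add_neg, ← Finset.sum_neg_distrib, add_comm]
  congr 1
  · simp
  · refine Finset.sum_congr rfl fun i hi => ?_
    rw [Nat.succ_sub (Finset.mem_Icc.1 hi).2, pow_succ]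
    ring

/-- `-T_{n+1}(z) + 2 (∑_{i=1}^{n} (-1)^{n-i} T_i(z) + (-1)^n) = (2-z) S_n(z)` for `n ≥ 0`. -/
theorem alternating_sum_T (n : ℕ) :
    -Tc ℂ ((n : ℤ) + 1) +
        2 * ((∑ i ∈ Finset.Icc 1 n, (-1 : ℂ[X]) ^ (n - i) * Tc ℂ (i : ℤ)) + (-1 : ℂ[X]) ^ n) =
      (2 - X) * S ℂ (n : ℤ) := by
  induction n with
  | zero =>
    have hS₀ : S ℂ 0 = 1 := S.eq_1 ℂ
    have hT₁ : Tc ℂ 1 = X := Tc.eq_2 ℂ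
    simp [hS₀, hT₁]
    ring
  | succ n ih =>
    have h : ((n + 1 : ℕ) : ℤ) + 1 = n + 2 := by push_cast; ring
    rw [sum_Icc_neg_one_pow_succ (fun i : ℕ => Tc ℂ (i : ℤ)), h, Nat.cast_succ, pow_succ]
    linear_combination Tc_add_one_sub_Tc_add_two ℂ n - ih
end
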